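/- The set of bounded linear operators on a C(K)-space having the Bishop property (B) need not be a right ideal: there exist a compact Hausdorff space K and bounded linear operators S, T : C(K) → C(K) such that T has the Bishop property (B) but the composition T ∘ S does not have the Bishop property (B). -/

import Mathlib

open Set Topology Filter

/-- `f ≺ g`: `f ≠ g` and `f` agrees with `g` on the support of `f` (the closure of
the set where `f` is nonzero). -/
def Prec {K : Type*} [TopologicalSpace K] (f g : C(K, ℝ)) : Prop :=
  f ≠ g ∧ ∀ t ∈ closure {t | f t ≠ 0}, f t = g t

/-- `f ≺_δ g`: `f ≺ g` and `‖f - g‖ ≥ δ`. -/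
def PrecDelta {K : Type*} [TopologicalSpace K] [CompactSpace K] (δ : ℝ) (f g : C(K, ℝ)) : Prop :=
  Prec f g ∧ δ ≤ ‖f - g‖

/-- `F` is a `δ`-`≺`-chain. -/
def IsPrecChain {K : Type*} [TopologicalSpace K] [CompactSpace K] (δ : ℝ)
    (F : Set C(K, ℝ)) : Prop :=
  ∀ f ∈ F, ∀ g ∈ F, f ≠ g → PrecDelta δ f g ∨ PrecDelta δ g f

/-- A compact Hausdorff space has the Bishop property (B) if for every `δ > 0`
every `δ`-`≺`-chain in `C(K)` is countable. -/
def HasBishop (K : Type*) [TopologicalSpace K] [CompactSpace K] [T2Space K] : Prop :=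
  ∀ δ : ℝ, 0 < δ → ∀ F : Set C(K, ℝ), IsPrecChain δ F → F.Countable

/-- A bounded linear operator `T` from `C(K)` to a Banach space `X` has the Bishop
property (B) if `inf {‖Tf - Tg‖ : f, g ∈ F, f ≺ g} = 0` for every norm-bounded
uncountable `≺`-chain `F ⊆ C(K)`. -/
def OpHasBishop {K : Type*} [TopologicalSpace K] [CompactSpace K]
    {X : Type*} [NormedAddCommGroup X] [NormedSpace ℝ X]
    (T : C(K, ℝ) →L[ℝ] X) : Prop :=
  ∀ F : Set C(K, ℝ),
    (∀ f ∈ F, ∀ g ∈ F, f ≠ g → Prec f g ∨ Prec g f) →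
    ¬ F.Countable → (∃ C : ℝ, ∀ f ∈ F, ‖f‖ ≤ C) →
    sInf {r : ℝ | ∃ f ∈ F, ∃ g ∈ F, Prec f g ∧ r = ‖T f - T g‖} = 0

section LocallyConnected

variable {M : Type*} [TopologicalSpace M]

/-- On a connected set where `g` does not vanish, a function agreeing with `g` on its support
vanishes everywhere or nowhere. -/
lemma ne_zero_iff_of_isPreconnected {f g : C(M, ℝ)}
    (hf : ∀ t ∈ closure {t | f t ≠ 0}, f t = g t) {W : Set M} (hW : IsPreconnected W)
    (hg : ∀ t ∈ W, g t ≠ 0) {x y : M} (hx : x ∈ W) (hy : y ∈ W) : f x ≠ 0 ↔ f y ≠ 0 := by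
  have hU : IsOpen {t | f t ≠ 0} := isOpen_ne_fun f.continuous continuous_const
  have hsub : W ⊆ {t | f t ≠ 0} ∪ (closure {t | f t ≠ 0})ᶜ := by
    intro t ht
    by_cases h : t ∈ closure {t | f t ≠ 0}
    · left
      rw [mem_ofPred_eq, hf t h]
      exact hg t ht
    · exact Or.inr h
  have hdisj : W ∩ ({t | f t ≠ 0} ∩ (closure {t | f t ≠ 0})ᶜ) = ∅ := by
    ext t
    simp only [mem_inter_iff, mem_empty_iff_false, iff_false, not_and]
    exact fun _ h h' ↦ h' (subset_closure h)
  rcases isPreconnected_iff_subset_of_disjoint.1 hW _ _ hU isClosed_closure.isOpen_compl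
    hsub hdisj with h | h
  · exact iff_of_true (h hx) (h hy)
  · exact iff_of_false (fun h' ↦ h hx (subset_closure h')) fun h' ↦ h hy (subset_closure h')

lemma eq_zero_or_eq {f g : C(M, ℝ)} (hf : ∀ t ∈ closure {t | f t ≠ 0}, f t = g t) (t : M) :
    f t = 0 ∨ f t = g t := by
  by_cases h : f t = 0
  · exact Or.inl h
  · exact Or.inr (hf t (subset_closure h))

/-- On a locally connected compact space, an infinite family of functions, each agreeing with a
fixed `g` on its support, has two members that are uniformly close. -/
lemma exists_ne_forall_abs_sub_lt [CompactSpace M] [LocallyConnectedSpace M] (g : C(M, ℝ))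
    {ε : ℝ} (hε : 0 < ε) {ι : Type*} [Infinite ι] (f : ι → C(M, ℝ))
    (hf : ∀ i, ∀ t ∈ closure {t | f i t ≠ 0}, f i t = g t) :
    ∃ i j, i ≠ j ∧ ∀ t, |f i t - f j t| < ε := by
  classical
  have hg : IsOpen {t | g t ≠ 0} := isOpen_ne_fun g.continuous continuous_const
  have hA : IsCompact {t | ε ≤ |g t|} :=
    (isClosed_le continuous_const (g.continuous.abs)).isCompact
  have hne : ∀ t, ε ≤ |g t| → g t ≠ 0 := fun t ht ↦ abs_pos.1 (hε.trans_le ht)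
  obtain ⟨s, -, hs⟩ := hA.elim_nhds_subcover (fun x ↦ connectedComponentIn {t | g t ≠ 0} x)
    fun x hx ↦ hg.connectedComponentIn.mem_nhds (mem_connectedComponentIn (hne x hx))
  obtain ⟨i, j, hij, h⟩ :=
    Finite.exists_ne_map_eq_of_infinite fun i ↦ fun x : s ↦ decide (f i x ≠ 0)
  refine ⟨i, j, hij, fun t ↦ ?_⟩
  by_cases ht : ε ≤ |g t|
  · obtain ⟨x, hx, hxt⟩ := mem_iUnion₂.1 (hs ht)
    have hxg : x ∈ {t | g t ≠ 0} :=
      connectedComponentIn_nonempty_iff.1 ⟨t, hxt⟩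
    have key : ∀ k, f k x ≠ 0 ↔ f k t ≠ 0 := fun k ↦
      ne_zero_iff_of_isPreconnected (hf k) isPreconnected_connectedComponentIn
        (fun u hu ↦ connectedComponentIn_subset _ _ hu) (mem_connectedComponentIn hxg) hxt
    have hx' : f i x ≠ 0 ↔ f j x ≠ 0 := decide_eq_decide.1 (congrFun h ⟨x, hx⟩)
    rw [key, key] at hx'
    have : f i t = f j t := by
      rcases eq_zero_or_eq (hf i) t with h1 | h1 <;> rcases eq_zero_or_eq (hf j) t with h2 | h2 <;>
        grind
    simpa [this] using hε
  · rw [not_le] at ht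
    rcases eq_zero_or_eq (hf i) t with h1 | h1 <;> rcases eq_zero_or_eq (hf j) t with h2 | h2 <;>
      simpa [h1, h2] using by assumption

end LocallyConnected

/-- An uncountable set on which `r` is total contains an element with infinitely many
`r`-predecessors. -/
lemma exists_infinite_predecessors {α : Type*} {r : α → α → Prop} {F : Set α}
    (hF : ∀ f ∈ F, ∀ g ∈ F, f ≠ g → r f g ∨ r g f) (hunc : ¬ F.Countable) :
    ∃ g ∈ F, {f ∈ F | r f g}.Infinite := by
  by_contra! hfin
  have hinf : F.Infinite := fun h ↦ hunc h.countable
  obtain ⟨D, hDF, hDinf, hDc⟩ : ∃ D ⊆ F, D.Infinite ∧ D.Countable :=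
    ⟨range fun n ↦ (hinf.natEmbedding F n : α),
      range_subset_iff.2 fun n ↦ (hinf.natEmbedding F n).2,
      infinite_range_of_injective (Subtype.val_injective.comp (hinf.natEmbedding F).injective),
      countable_range _⟩
  have hcount : (D ∪ ⋃ d ∈ D, {f ∈ F | r f d}).Countable :=
    hDc.union (hDc.biUnion fun d hd ↦ (hfin d (hDF hd)).countable)
  obtain ⟨g, hg, hgD⟩ : ∃ g ∈ F, g ∉ D ∪ ⋃ d ∈ D, {f ∈ F | r f d} := by
    by_contra! h
    exact hunc (hcount.mono h)
  simp only [mem_union, mem_iUnion, not_or, not_exists] at hgD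
  refine hDinf ((hfin g hg).subset fun d hd ↦ ⟨hDF hd, ?_⟩)
  refine (hF d (hDF hd) g hg fun h ↦ hgD.1 (h ▸ hd)).resolve_right fun h ↦ hgD.2 d hd ⟨hg, h⟩

section Sum

variable {L M : Type*} [TopologicalSpace L] [TopologicalSpace M] [CompactSpace L] [CompactSpace M]

/-- Extension by zero from the right summand of a disjoint union. -/
noncomputable def extendZeroInr : C(M, ℝ) →L[ℝ] C(L ⊕ M, ℝ) :=
  LinearMap.mkContinuous
    { toFun := fun f ↦ ⟨Sum.elim (fun _ ↦ 0) f, continuous_const.sumElim f.continuous⟩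
      map_add' := fun f g ↦ by ext (x | x) <;> simp
      map_smul' := fun c f ↦ by ext (x | x) <;> simp } 1 fun f ↦ by
    rw [one_mul, ContinuousMap.norm_le _ (norm_nonneg f)]
    rintro (x | x)
    · simp
    · exact f.norm_coe_le_norm x

/-- Restriction to the right summand followed by extension by zero. -/
noncomputable def projInr : C(L ⊕ M, ℝ) →L[ℝ] C(L ⊕ M, ℝ) :=
  extendZeroInr.comp (ContinuousMap.compCLM ℝ ℝ ⟨Sum.inr, continuous_inr⟩)

@[simp] lemma projInr_inl (f : C(L ⊕ M, ℝ)) (x : L) : projInr f (Sum.inl x) = 0 := rfl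

/-- The projection onto a locally connected summand has the Bishop property (B). -/
theorem opHasBishop_projInr [LocallyConnectedSpace M] :
    OpHasBishop (projInr : C(L ⊕ M, ℝ) →L[ℝ] C(L ⊕ M, ℝ)) := by
  intro F hF hunc _
  obtain ⟨g, -, hinf⟩ := exists_infinite_predecessors hF hunc
  have := hinf.to_subtype
  set R := {r : ℝ | ∃ f ∈ F, ∃ g ∈ F, Prec f g ∧ r = ‖projInr f - projInr g‖}
  have hnonneg : ∀ r ∈ R, 0 ≤ r := by
    rintro _ ⟨_, _, _, _, _, rfl⟩
    exact norm_nonneg _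
  refine le_antisymm (le_of_forall_pos_lt_add fun ε hε ↦ ?_) (Real.sInf_nonneg hnonneg)
  have hmem : ∃ r ∈ R, r < ε := by
    obtain ⟨i, j, hij, hclose⟩ := exists_ne_forall_abs_sub_lt
      (g.comp ⟨Sum.inr, continuous_inr⟩) hε
      (fun f : {f ∈ F | Prec f g} ↦ (f : C(L ⊕ M, ℝ)).comp (⟨Sum.inr, continuous_inr⟩ : C(M, L ⊕ M)))
      fun f t ht ↦ f.2.2.2 _ (map_mem_closure continuous_inr ht fun _ h ↦ h)
    have hlt : ‖projInr (i : C(L ⊕ M, ℝ)) - projInr (j : C(L ⊕ M, ℝ))‖ < ε := by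
      rw [ContinuousMap.norm_lt_iff _ hε]
      rintro (x | x)
      · simpa using hε
      · exact hclose x
    rcases hF _ i.2.1 _ j.2.1 (Subtype.coe_ne_coe.2 hij) with h | h
    · exact ⟨_, ⟨_, i.2.1, _, j.2.1, h, rfl⟩, hlt⟩
    · exact ⟨_, ⟨_, j.2.1, _, i.2.1, h, rfl⟩, by rwa [norm_sub_rev]⟩
  obtain ⟨r, hr, hrε⟩ := hmem
  rw [zero_add]
  exact (csInf_le ⟨0, hnonneg⟩ hr).trans_lt hrε

end Sum

section DualBall

variable (E : Type*) [NormedAddCommGroup E] [NormedSpace ℝ E]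

/-- The closed unit ball of the dual of `E` with the weak-* topology. -/
abbrev DualBall : Type _ :=
  (WeakDual.toStrongDual ⁻¹' Metric.closedBall (0 : StrongDual ℝ E) 1 : Set (WeakDual ℝ E))

instance : CompactSpace (DualBall E) :=
  isCompact_iff_compactSpace.1 (WeakDual.isCompact_closedBall 0 1)

instance : LocallyConnectedSpace (DualBall E) := by
  have : LocallyConvexSpace ℝ (WeakDual ℝ E) :=
    inferInstanceAs (LocallyConvexSpace ℝ (WeakBilin _))
  have hconv : Convex ℝ (WeakDual.toStrongDual ⁻¹' Metric.closedBall (0 : StrongDual ℝ E) 1) :=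
    (convex_closedBall _ _).linear_preimage
      (WeakDual.toStrongDual (𝕜 := ℝ) (E := E)).toLinearMap
  have := hconv.locallyPathConnectedSpace
  infer_instance

variable {E}

/-- The canonical embedding of `E` into the continuous functions on its dual ball. -/
noncomputable def evalDualBall : E →L[ℝ] C(DualBall E, ℝ) :=
  LinearMap.mkContinuous
    { toFun := fun x ↦ ⟨fun φ ↦ φ.1 x, (WeakDual.eval_continuous x).comp continuous_subtype_val⟩
      map_add' := fun x y ↦ by ext φ; exact map_add φ.1 x y
      map_smul' := fun c x ↦ by ext φ; exact map_smul φ.1 c x } 1 fun x ↦ by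
    rw [one_mul, ContinuousMap.norm_le _ (norm_nonneg x)]
    intro φ
    have hφ : ‖WeakDual.toStrongDual φ.1‖ ≤ 1 := mem_closedBall_zero_iff.1 φ.2
    exact (WeakDual.toStrongDual φ.1).le_of_opNorm_le hφ x |>.trans_eq (one_mul _)

end DualBall

/-- The Dirac functional at a point, as an element of the dual ball. -/
noncomputable def diracDualBall {L : Type*} [TopologicalSpace L] [CompactSpace L] (p : L) :
    DualBall C(L, ℝ) :=
  ⟨StrongDual.toWeakDual (ContinuousMap.evalCLM ℝ p), by
    refine mem_closedBall_zero_iff.2 (ContinuousLinearMap.opNorm_le_bound _ zero_le_one fun f ↦ ?_)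
    rw [one_mul]
    exact f.norm_coe_le_norm p⟩

section Chain

variable {X : Type*} (M : Type*) [TopologicalSpace M]

lemma isClopen_inl_image_ultrafilter (s : Set X) :
    IsClopen (Sum.inl '' {u : Ultrafilter X | s ∈ u} : Set (Ultrafilter X ⊕ M)) :=
  ⟨IsClosedEmbedding.inl.isClosedMap _ (ultrafilter_isClosed_basic s),
    IsOpenEmbedding.inl.isOpenMap _ (ultrafilter_isOpen_basic s)⟩

/-- The indicator function of the clopen set of ultrafilters containing `s`. -/
noncomputable def ultrafilterIndicator (s : Set X) : C(Ultrafilter X ⊕ M, ℝ) :=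
  ⟨(Sum.inl '' {u : Ultrafilter X | s ∈ u}).indicator 1,
    continuous_one.indicator fun _ h ↦ by
      simp [(isClopen_inl_image_ultrafilter M s).frontier_eq] at h⟩

open Classical in
lemma ultrafilterIndicator_inl (s : Set X) (u : Ultrafilter X) :
    ultrafilterIndicator M s (Sum.inl u) = if s ∈ u then 1 else 0 := by
  simp [ultrafilterIndicator, indicator]

lemma ultrafilterIndicator_pure_of_mem {s : Set X} {x : X} (h : x ∈ s) :
    ultrafilterIndicator M s (Sum.inl (pure x)) = 1 := by
  simp [ultrafilterIndicator_inl, h]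

lemma ultrafilterIndicator_pure_of_notMem {s : Set X} {x : X} (h : x ∉ s) :
    ultrafilterIndicator M s (Sum.inl (pure x)) = 0 := by
  simp [ultrafilterIndicator_inl, h]

lemma norm_ultrafilterIndicator_le [CompactSpace M] (s : Set X) :
    ‖ultrafilterIndicator M s‖ ≤ 1 := by
  rw [ContinuousMap.norm_le _ zero_le_one]
  intro x
  simp only [ultrafilterIndicator, ContinuousMap.coe_mk]
  exact (norm_indicator_le_norm_self _ _).trans (by simp)

lemma ultrafilterIndicator_injective :
    Function.Injective (ultrafilterIndicator M : Set X → C(Ultrafilter X ⊕ M, ℝ)) := by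
  intro s t h
  ext x
  have hx := DFunLike.congr_fun h (Sum.inl (pure x))
  rw [ultrafilterIndicator_inl, ultrafilterIndicator_inl, Ultrafilter.mem_pure,
    Ultrafilter.mem_pure] at hx
  by_cases hs : x ∈ s <;> by_cases ht : x ∈ t <;> simp [hs, ht] at hx ⊢

lemma prec_ultrafilterIndicator {s t : Set X} (h : s ⊂ t) :
    Prec (ultrafilterIndicator M s) (ultrafilterIndicator M t) := by
  refine ⟨(ultrafilterIndicator_injective M).ne h.ne, fun x hx ↦ ?_⟩
  have hx' : x ∈ Sum.inl '' {u : Ultrafilter X | s ∈ u} :=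
    closure_minimal (fun y hy ↦ mem_of_indicator_ne_zero hy)
      (isClopen_inl_image_ultrafilter M s).isClosed hx
  obtain ⟨u, hu, rfl⟩ := hx'
  have hu' : s ∈ u := hu
  have ht : t ∈ u := mem_of_superset hu' h.subset
  simp [ultrafilterIndicator_inl, hu', ht]

end Chain

/-- The embedding of `C(L)` into the functions on its dual ball, as an operator on the
functions on the disjoint union. -/
noncomputable def dualBallShift (L : Type*) [TopologicalSpace L] [CompactSpace L] :
    C(L ⊕ DualBall C(L, ℝ), ℝ) →L[ℝ] C(L ⊕ DualBall C(L, ℝ), ℝ) :=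
  extendZeroInr.comp (evalDualBall.comp (ContinuousMap.compCLM ℝ ℝ ⟨Sum.inl, continuous_inl⟩))

lemma abs_sub_le_norm_projInr_comp_dualBallShift {L : Type*} [TopologicalSpace L] [CompactSpace L]
    (f g : C(L ⊕ DualBall C(L, ℝ), ℝ)) (p : L) :
    |f (Sum.inl p) - g (Sum.inl p)| ≤
      ‖projInr.comp (dualBallShift L) f - projInr.comp (dualBallShift L) g‖ :=
  ContinuousMap.norm_coe_le_norm
    (projInr.comp (dualBallShift L) f - projInr.comp (dualBallShift L) g)
    (Sum.inr (diracDualBall p))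

theorem not_opHasBishop_projInr_comp_dualBallShift :
    ¬ OpHasBishop (projInr.comp (dualBallShift (Ultrafilter ℝ))) := by
  intro h
  set M := DualBall C(Ultrafilter ℝ, ℝ)
  have hinj : Function.Injective fun t : ℝ ↦ ultrafilterIndicator M (Iio t) :=
    (ultrafilterIndicator_injective M).comp Iio_injective
  have hchain : ∀ s t : ℝ, s < t →
      Prec (ultrafilterIndicator M (Iio s)) (ultrafilterIndicator M (Iio t)) := fun s t hst ↦
    prec_ultrafilterIndicator M (Iio_ssubset_Iio hst)
  have hzero := h (range fun t : ℝ ↦ ultrafilterIndicator M (Iio t)) ?_ ?_ ?_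
  · refine (zero_lt_one' ℝ).not_ge (hzero ▸ le_csInf ?_ ?_)
    · exact ⟨_, _, ⟨0, rfl⟩, _, ⟨1, rfl⟩, hchain 0 1 zero_lt_one, rfl⟩
    · rintro _ ⟨_, ⟨s, rfl⟩, _, ⟨t, rfl⟩, hst, rfl⟩
      have hne : s ≠ t := fun h ↦ hst.1 (by rw [h])
      rcases hne.lt_or_gt with hlt | hlt
      · refine le_trans ?_ (abs_sub_le_norm_projInr_comp_dualBallShift _ _ (pure s))
        dsimp only
        rw [ultrafilterIndicator_pure_of_notMem M (by simp),
          ultrafilterIndicator_pure_of_mem M (mem_Iio.2 hlt)]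
        simp
      · refine le_trans ?_ (abs_sub_le_norm_projInr_comp_dualBallShift _ _ (pure t))
        dsimp only
        rw [ultrafilterIndicator_pure_of_notMem M (s := Iio t) (by simp),
          ultrafilterIndicator_pure_of_mem M (mem_Iio.2 hlt)]
        simp
  · rintro _ ⟨s, rfl⟩ _ ⟨t, rfl⟩ hst
    have hne : s ≠ t := fun h ↦ hst (by rw [h])
    exact hne.lt_or_gt.imp (hchain s t) (hchain t s)
  · intro hc
    rw [← image_univ] at hc
    exact Cardinal.not_countable_real (countable_of_injective_of_countable_image hinj.injOn hc)
  · exact ⟨1, by rintro _ ⟨t, rfl⟩; exact norm_ultrafilterIndicator_le M _⟩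

/-- **Example 4.2.** The set of operators on a `C(K)`-space having the Bishop property
(B) need not be a right ideal: there are a compact Hausdorff space `K` and bounded
linear operators `S, T` on `C(K)` such that `T` has (B) but `T ∘ S` does not. -/
theorem stmt19 :
    ∃ (K : Type) (tK : TopologicalSpace K),
      letI := tK;
      ∃ (cK : CompactSpace K) (hK : T2Space K)
        (S T : C(K, ℝ) →L[ℝ] C(K, ℝ)),
        OpHasBishop T ∧ ¬ OpHasBishop (T.comp S) :=
  ⟨Ultrafilter ℝ ⊕ DualBall C(Ultrafilter ℝ, ℝ), inferInstance, inferInstance, inferInstance,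
    dualBallShift (Ultrafilter ℝ), projInr, opHasBishop_projInr,
    not_opHasBishop_projInr_comp_dualBallShift⟩
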